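/- Let α ∈ Δ' and let X be a compact shift-invariant subset of Σ⁺ such that α ∈ DF_MZ(X). Then there exists s ∈ X with I(α) ≤ s in the lexicographic order (equivalently, the maximum of X is at least I(α)). -/

import Mathlib

open Filter Topology MeasureTheory

/-- The sequence space `Σ⁺ = {0,1,2}^ℕ` (with the product topology). -/
abbrev Seq3 := ℕ → Fin 3

/-- The shift map `σ`. -/
def shift (s : Seq3) : Seq3 := fun n => s (n + 1)

/-- The observable `κ(s) = e_{s₀}`. -/
noncomputable def kappa (s : Seq3) : Fin 3 → ℝ := fun i => if i = s 0 then 1 else 0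

/-- The cocycle `κ_σ(s,r) = Σ_{i<r} κ(σⁱ s)`. -/
noncomputable def birk (s : Seq3) (r : ℕ) : Fin 3 → ℝ :=
  ∑ i ∈ Finset.range r, kappa (shift^[i] s)

/-- The Birkhoff digit frequency of `s` exists and equals `v`. -/
def hasFreq (s : Seq3) (v : Fin 3 → ℝ) : Prop :=
  Tendsto (fun r : ℕ => (r : ℝ)⁻¹ • birk s r) atTop (nhds v)

/-- The lexicographic order on `Σ⁺`. -/
def lexLe (s t : Seq3) : Prop :=
  s = t ∨ ∃ n, (∀ i, i < n → s i = t i) ∧ s n < t n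

/-- The set `Max` of maximal sequences. -/
def MaxSet : Set Seq3 := {w | w 0 = 2 ∧ ∀ r : ℕ, lexLe (shift^[r] w) w}

/-- The symbolic β-shift `B(w)`. -/
def BetaShift (w : Seq3) : Set Seq3 := {s | ∀ r : ℕ, lexLe (shift^[r] s) w}

/-- The digit frequency set `DF(w)`. -/
def DF (w : Seq3) : Set (Fin 3 → ℝ) := {v | ∃ s ∈ BetaShift w, hasFreq s v}

/-- The Misiurewicz–Ziemian digit frequency set `DF_MZ(X)` of a subset `X ⊆ Σ⁺`. -/
def DFMZ (X : Set Seq3) : Set (Fin 3 → ℝ) :=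
  {v | ∃ (s : ℕ → Seq3) (r : ℕ → ℕ), (∀ i, s i ∈ X) ∧ Tendsto r atTop atTop ∧
    Tendsto (fun i => (r i : ℝ)⁻¹ • birk (s i) (r i)) atTop (nhds v)}

/-- The standard 2-simplex `Δ ⊆ ℝ³`. -/
def Delta : Set (Fin 3 → ℝ) := {α | (∀ i, 0 ≤ α i) ∧ α 0 + α 1 + α 2 = 1}

/-- `Δ' = {α ∈ Δ : α₂ > 0}`. -/
def Delta' : Set (Fin 3 → ℝ) := {α | α ∈ Delta ∧ 0 < α 2}

/-- `I` is the infimax sequence of `α`: the infimum, in the lexicographic order, of the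
(nonempty) set of maximal sequences with digit frequency `α`; it belongs to `Max`. -/
def IsInfimax (α : Fin 3 → ℝ) (I : Seq3) : Prop :=
  {w | w ∈ MaxSet ∧ hasFreq w α}.Nonempty ∧ I ∈ MaxSet ∧
    (∀ w, w ∈ MaxSet ∧ hasFreq w α → lexLe I w) ∧
    (∀ b : Seq3, (∀ w, w ∈ MaxSet ∧ hasFreq w α → lexLe b w) → lexLe b I)

/-- The closure of the forward `σ`-orbit of `s` (e.g. `C_α` is `orbitClosure I(α)`). -/
def orbitClosure (s : Seq3) : Set Seq3 := closure {t | ∃ r : ℕ, shift^[r] s = t}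

/-- A vector in `ℝ³` is rational if all its coordinates are. -/
def IsRat (v : Fin 3 → ℝ) : Prop := ∀ i, ∃ q : ℚ, v i = (q : ℝ)

/-- A minimal set of a continuous map: a nonempty compact invariant set in which every
point has dense forward orbit. -/
def IsMinimalSet {X : Type*} [TopologicalSpace X] (f : X → X) (C : Set X) : Prop :=
  C.Nonempty ∧ IsCompact C ∧ Set.MapsTo f C C ∧
    ∀ x ∈ C, C ⊆ closure {y | ∃ n : ℕ, f^[n] x = y}

/-!
Suppose that every element of `X` is smaller than `I = I(α)`. By compactness the first difference
with `I` occurs at an index bounded by some `n`, so every element of `X` is a concatenation of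
blocks from the finite list `I₀ … I_{j-1} a` with `j ≤ n` and `a < I_j`. As `α ∈ DF_MZ(X)`, no linear
functional can be positive on the discrepancies of all blocks, hence some convex combination of
these discrepancies vanishes. Concatenating the blocks greedily with the frequencies of that
combination produces sequences of bounded discrepancy with respect to `α`. Since `I` is maximal,
all their shifts stay below `I`, with first difference at an index at most `n`. Both properties
pass to the closure, whose largest element is therefore a maximal sequence of frequency `α` that is
smaller than `I`, which is absurd.
-/

theorem neg_mul_le_birkhoffSum {X : Type*} {T : X → X} {A : Set X} (hA : Set.MapsTo T A A)
    {ψ : X → ℝ} {M : ℝ} (hM : ∀ x ∈ A, |ψ x| ≤ M) {N : ℕ}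
    (hN : ∀ x ∈ A, ∃ l, 0 < l ∧ l ≤ N ∧ 0 ≤ birkhoffSum T ψ l x) (r : ℕ) {x : X} (hx : x ∈ A) :
    -(N * M) ≤ birkhoffSum T ψ r x := by
  induction r using Nat.strong_induction_on generalizing x with
  | _ r ih =>
    obtain ⟨l, hl0, hlN, hl⟩ := hN x hx
    obtain hrl | hlr := lt_or_ge r l
    · have hM0 : 0 ≤ M := (abs_nonneg _).trans (hM x hx)
      calc -(N * M) ≤ -(r * M) := by gcongr; exact hrl.le.trans hlN
        _ = ∑ _i ∈ Finset.range r, -M := by simp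
        _ ≤ birkhoffSum T ψ r x :=
          Finset.sum_le_sum fun i _ => neg_le_of_abs_le (hM _ (hA.iterate i hx))
    · obtain ⟨k, rfl⟩ := Nat.exists_eq_add_of_le hlr
      rw [birkhoffSum_add]
      linarith [ih k (by omega) (hA.iterate l hx)]

theorem exists_mem_stdSimplex_sum_smul_eq_zero_or_exists_forall_le {E B : Type*}
    [AddCommGroup E] [Module ℝ E] [TopologicalSpace E] [IsTopologicalAddGroup E]
    [ContinuousSMul ℝ E] [LocallyConvexSpace ℝ E] [T2Space E] [Fintype B] (g : B → E) :
    (∃ f ∈ stdSimplex ℝ B, ∑ b, f b • g b = 0) ∨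
      ∃ φ : StrongDual ℝ E, ∃ δ > 0, ∀ b, δ ≤ φ (g b) := by
  classical
  let L : (B → ℝ) →L[ℝ] E := ∑ b, (ContinuousLinearMap.proj b).smulRight (g b)
  have hL : ∀ f, L f = ∑ b, f b • g b := fun f => by simp [L]
  refine or_iff_not_imp_left.2 fun hzero => ?_
  have hnotMem : (0 : E) ∉ L '' stdSimplex ℝ B := fun ⟨f, hf, hf0⟩ =>
    hzero ⟨f, hf, (hL f).symm.trans hf0⟩
  obtain ⟨φ, δ, hδ, hφ⟩ := geometric_hahn_banach_point_closed
    ((convex_stdSimplex ℝ B).linear_image L.toLinearMap)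
    ((isCompact_stdSimplex ℝ B).image L.continuous).isClosed hnotMem
  refine ⟨φ, δ, by simpa using hδ, fun b => (hφ _ ⟨_, single_mem_stdSimplex ℝ b, ?_⟩).le⟩
  simp [hL, Pi.single_apply]

/-- The region in which a greedy choice keeps the vector of debts `d`: after `k` choices made with
prescribed frequencies `f`, the debt `d b` is `k * f b` minus the number of times `b` was chosen. -/
def balanced (B : Type*) [Fintype B] : Set (B → ℝ) :=
  {d | ∑ b, d b = 0 ∧ ∀ b, -1 ≤ d b}

section Balanced

variable {B : Type*} [Fintype B]

theorem zero_mem_balanced : (0 : B → ℝ) ∈ balanced B := by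
  simp [balanced]

theorem abs_le_card_of_mem_balanced {d : B → ℝ} (hd : d ∈ balanced B) (b : B) :
    |d b| ≤ Fintype.card B := by
  have hcard : (1 : ℝ) ≤ Fintype.card B := by
    exact_mod_cast Fintype.card_pos_iff.2 ⟨b⟩
  have hsum : d b + 1 ≤ ∑ c, (d c + 1) :=
    Finset.single_le_sum (f := fun c => d c + 1) (fun c _ => by linarith [hd.2 c])
      (Finset.mem_univ b)
  rw [Finset.sum_add_distrib, hd.1, Finset.sum_const, Finset.card_univ, nsmul_one] at hsum
  exact abs_le.2 ⟨by linarith [hd.2 b], by linarith⟩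

theorem norm_sum_smul_le_of_mem_balanced {E : Type*} [SeminormedAddCommGroup E] [NormedSpace ℝ E]
    (g : B → E) {d : B → ℝ} (hd : d ∈ balanced B) :
    ‖∑ b, d b • g b‖ ≤ Fintype.card B * ∑ b, ‖g b‖ := by
  rw [Finset.mul_sum]
  refine norm_sum_le_of_le _ fun b _ => ?_
  rw [norm_smul, Real.norm_eq_abs]
  gcongr
  exact abs_le_card_of_mem_balanced hd b

variable [DecidableEq B] {f : B → ℝ}

theorem exists_add_sub_single_mem_balanced (hf : f ∈ stdSimplex ℝ B) {d : B → ℝ}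
    (hd : d ∈ balanced B) : ∃ b, d + f - Pi.single b 1 ∈ balanced B := by
  have hsum : ∑ b, (d b + f b) = 1 := by rw [Finset.sum_add_distrib, hd.1, hf.2, zero_add]
  obtain ⟨p, -, hp⟩ : ∃ p ∈ Finset.univ, 0 < d p + f p :=
    Finset.exists_lt_of_sum_lt (by simp [hsum])
  refine ⟨p, by simp [Finset.sum_sub_distrib, hsum], fun b => ?_⟩
  obtain rfl | hb := eq_or_ne b p
  · simpa using hp.le
  · simpa [hb] using add_le_add (hd.2 b) (hf.1 b)

theorem exists_mapsTo_balanced (hf : f ∈ stdSimplex ℝ B) :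
    ∃ pick : (B → ℝ) → B,
      Set.MapsTo (fun d => d + f - Pi.single (pick d) 1) (balanced B) (balanced B) := by
  have : Nonempty B := ⟨(exists_add_sub_single_mem_balanced hf zero_mem_balanced).choose⟩
  choose! pick hpick using fun d => exists_add_sub_single_mem_balanced hf (d := d)
  exact ⟨pick, hpick⟩

end Balanced

/-- `s` first differs from `t` at index `j`, and is smaller there. The strict lexicographic order
is `∃ j, LexLtAt j s t`; keeping track of `j` gives conditions that are both open and closed. -/
def LexLtAt (j : ℕ) (s t : Seq3) : Prop :=
  (∀ i < j, s i = t i) ∧ s j < t j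

theorem lexLe_iff_toLex_le {s t : Seq3} : lexLe s t ↔ toLex s ≤ toLex t :=
  (or_congr toLex_inj Iff.rfl).symm.trans le_iff_eq_or_lt.symm

theorem toLex_lt_iff_exists_lexLtAt {s t : Seq3} : toLex s < toLex t ↔ ∃ j, LexLtAt j s t :=
  Iff.rfl

theorem not_lexLe_iff_exists_lexLtAt {s t : Seq3} : ¬ lexLe s t ↔ ∃ j, LexLtAt j t s := by
  rw [lexLe_iff_toLex_le, not_le]
  exact toLex_lt_iff_exists_lexLtAt

theorem LexLtAt.trans_lexLe {j : ℕ} {s t u : Seq3} (hst : LexLtAt j s t) (htu : lexLe t u) :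
    ∃ k ≤ j, LexLtAt k s u := by
  obtain rfl | ⟨k, hk, hlt⟩ := htu
  · exact ⟨j, le_rfl, hst⟩
  obtain hjk | hkj := lt_or_ge j k
  · exact ⟨j, le_rfl, fun i hi => (hst.1 i hi).trans (hk i (hi.trans hjk)), hk j hjk ▸ hst.2⟩
  · have hsk : s k ≤ t k := hkj.lt_or_eq.elim (fun h => (hst.1 k h).le) fun h => h ▸ hst.2.le
    exact ⟨k, hkj, fun i hi => (hst.1 i (hi.trans_le hkj)).trans (hk i hi), hsk.trans_lt hlt⟩

theorem isClopen_setOf_lexLtAt (j : ℕ) (t : Seq3) : IsClopen {s | LexLtAt j s t} := by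
  have hagree : IsClopen (⋂ i ∈ Set.Iio j, (fun s : Seq3 => s i) ⁻¹' {t i}) :=
    (Set.finite_Iio j).isClopen_biInter fun i _ =>
      (isClopen_discrete _).preimage (continuous_apply i)
  have hlt : IsClopen ((fun s : Seq3 => s j) ⁻¹' Set.Iio (t j)) :=
    (isClopen_discrete _).preimage (continuous_apply j)
  convert hagree.inter hlt using 1
  ext s
  simp [LexLtAt]

theorem isClopen_setOf_exists_le_lexLtAt (n : ℕ) (t : Seq3) :
    IsClopen {s | ∃ j ≤ n, LexLtAt j s t} := by
  convert (Set.finite_Iic n).isClopen_biUnion fun j _ => isClopen_setOf_lexLtAt j t using 1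
  ext s
  simp

theorem exists_forall_exists_le_lexLtAt {X : Set Seq3} (hX : IsCompact X) {t : Seq3}
    (hlt : ∀ s ∈ X, ¬ lexLe t s) : ∃ n, ∀ s ∈ X, ∃ j ≤ n, LexLtAt j s t := by
  refine hX.elim_directed_cover (fun n => {s | ∃ j ≤ n, LexLtAt j s t})
    (fun n => (isClopen_setOf_exists_le_lexLtAt n t).isOpen) (fun s hs => ?_) ?_
  · obtain ⟨j, hj⟩ := not_lexLe_iff_exists_lexLtAt.1 (hlt s hs)
    exact Set.mem_iUnion.2 ⟨j, j, le_rfl, hj⟩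
  · exact Monotone.directed_le fun m n hmn s ⟨j, hj, hs⟩ => ⟨j, hj.trans hmn, hs⟩

theorem upperSemicontinuous_toLex : UpperSemicontinuous (toLex : Seq3 → Lex Seq3) := by
  refine upperSemicontinuous_iff_isOpen_preimage.2 fun t => ?_
  convert isOpen_iUnion fun j => (isClopen_setOf_lexLtAt j (ofLex t)).isOpen using 1
  ext s
  rw [Set.mem_iUnion]
  exact toLex_lt_iff_exists_lexLtAt (t := ofLex t)

theorem exists_mem_forall_lexLe {X : Set Seq3} (hX : IsCompact X) (hne : X.Nonempty) :
    ∃ w ∈ X, ∀ s ∈ X, lexLe s w := by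
  obtain ⟨w, hw, hmax⟩ := (upperSemicontinuous_toLex.upperSemicontinuousOn X).exists_isMaxOn hne hX
  exact ⟨w, hw, fun s hs => lexLe_iff_toLex_le.2 (hmax hs)⟩

theorem shift_iterate_apply (r : ℕ) (s : Seq3) (i : ℕ) : shift^[r] s i = s (i + r) := by
  induction r generalizing i with
  | zero => rfl
  | succ r ih => rw [Function.iterate_succ_apply', shift, ih, add_right_comm, add_assoc]

theorem continuous_shift : Continuous shift :=
  continuous_pi fun i => continuous_apply (i + 1)

theorem kappa_eq_single (s : Seq3) : kappa s = Pi.single (s 0) 1 := by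
  ext d
  simp [kappa, Pi.single_apply]

theorem continuous_kappa : Continuous kappa := by
  have hdiscrete : Continuous fun a : Fin 3 => (Pi.single a 1 : Fin 3 → ℝ) :=
    continuous_of_discreteTopology
  rw [funext kappa_eq_single]
  exact hdiscrete.comp (continuous_apply 0)

theorem norm_kappa (s : Seq3) : ‖kappa s‖ = 1 := by
  rw [kappa_eq_single, Pi.norm_single, norm_one]

theorem birk_succ (s : Seq3) (r : ℕ) : birk s (r + 1) = birk s r + Pi.single (s r) 1 := by
  rw [birk, Finset.sum_range_succ, kappa_eq_single, shift_iterate_apply, zero_add, birk]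

theorem continuous_birk (r : ℕ) : Continuous fun s => birk s r :=
  continuous_finsetSum _ fun i _ => continuous_kappa.comp (continuous_shift.iterate i)

theorem exists_apply_eq_of_hasFreq {s : Seq3} {α : Fin 3 → ℝ} (hs : hasFreq s α) {d : Fin 3}
    (hd : α d ≠ 0) : ∃ m, s m = d := by
  by_contra! hne
  have hbirk : ∀ r, birk s r d = 0 := fun r => by
    induction r with
    | zero => simp [birk]
    | succ r ih => simp [birk_succ, ih, (hne r).symm]
  have hlim := tendsto_pi_nhds.1 hs d
  simp only [Pi.smul_apply, hbirk, smul_zero] at hlim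
  exact hd (tendsto_nhds_unique hlim tendsto_const_nhds)

/-- The discrepancy `κ_σ(s, r) - r α`: how far the first `r` digits of `s` are from having
frequency `α`. -/
noncomputable def discrepancy (α : Fin 3 → ℝ) (s : Seq3) (r : ℕ) : Fin 3 → ℝ :=
  birk s r - (r : ℝ) • α

section Discrepancy

variable {α : Fin 3 → ℝ} {s t : Seq3}

theorem discrepancy_zero : discrepancy α s 0 = 0 := by
  simp [discrepancy, birk]

theorem discrepancy_succ (r : ℕ) :
    discrepancy α s (r + 1) = discrepancy α s r + (Pi.single (s r) 1 - α) := by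
  rw [discrepancy, discrepancy, birk_succ, Nat.cast_succ, add_smul, one_smul]
  abel

theorem discrepancy_congr {r : ℕ} (h : ∀ i < r, s i = t i) :
    discrepancy α s r = discrepancy α t r := by
  induction r with
  | zero => rw [discrepancy_zero, discrepancy_zero]
  | succ r ih =>
    rw [discrepancy_succ, discrepancy_succ, ih fun i hi => h i (hi.trans r.lt_succ_self),
      h r r.lt_succ_self]

theorem continuous_discrepancy (r : ℕ) : Continuous fun s => discrepancy α s r :=
  (continuous_birk r).sub continuous_const

theorem hasFreq_of_norm_discrepancy_le {C : ℝ} (hC : ∀ r, ‖discrepancy α s r‖ ≤ C) :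
    hasFreq s α := by
  rw [hasFreq, tendsto_iff_norm_sub_tendsto_zero]
  refine squeeze_zero' (.of_forall fun _ => norm_nonneg _) ?_
    (tendsto_const_div_atTop_nhds_zero_nat C)
  filter_upwards [eventually_ne_atTop 0] with r hr
  have hr' : (r : ℝ) ≠ 0 := Nat.cast_ne_zero.2 hr
  calc ‖(r : ℝ)⁻¹ • birk s r - α‖ = ‖(r : ℝ)⁻¹ • discrepancy α s r‖ := by
        rw [discrepancy, smul_sub, inv_smul_smul₀ hr']
    _ = ‖discrepancy α s r‖ / r := by
        rw [norm_smul, norm_inv, Real.norm_natCast, inv_mul_eq_div]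
    _ ≤ C / r := by gcongr; exact hC r

end Discrepancy

theorem exists_mem_closure_mem_MaxSet_hasFreq {α : Fin 3 → ℝ} (hα : 0 < α 2) {Y : Set Seq3}
    (hne : Y.Nonempty) (hY : Set.MapsTo shift Y Y) {C : ℝ}
    (hC : ∀ s ∈ Y, ∀ r, ‖discrepancy α s r‖ ≤ C) :
    ∃ w ∈ closure Y, w ∈ MaxSet ∧ hasFreq w α := by
  obtain ⟨w, hw, hmax⟩ := exists_mem_forall_lexLe isClosed_closure.isCompact hne.closure
  have hfreq : hasFreq w α := hasFreq_of_norm_discrepancy_le fun r =>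
    closure_minimal (fun s hs => hC s hs r)
      (isClosed_le (continuous_discrepancy r).norm continuous_const) hw
  have hshift : ∀ r, lexLe (shift^[r] w) w := fun r =>
    hmax _ ((hY.closure continuous_shift).iterate r hw)
  refine ⟨w, hw, ⟨?_, hshift⟩, hfreq⟩
  obtain ⟨m, hm⟩ := exists_apply_eq_of_hasFreq hfreq hα.ne'
  have hhead : shift^[m] w 0 ≤ w 0 := by
    obtain h | ⟨_ | k, hk, hlt⟩ := hshift m
    · rw [h]
    · exact hlt.le
    · exact (hk 0 k.succ_pos).le
  rw [shift_iterate_apply, zero_add, hm] at hhead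
  exact le_antisymm (Fin.le_last _) hhead

theorem le_apply_of_mem_DFMZ {X : Set Seq3} (hX : Set.MapsTo shift X X)
    (φ : StrongDual ℝ (Fin 3 → ℝ)) {c : ℝ} {N : ℕ}
    (hN : ∀ s ∈ X, ∃ l, 0 < l ∧ l ≤ N ∧ l * c ≤ φ (birk s l)) {α : Fin 3 → ℝ}
    (hα : α ∈ DFMZ X) : c ≤ φ α := by
  obtain ⟨s, r, hs, hr, hlim⟩ := hα
  have hsum : ∀ l s, birkhoffSum shift (fun s => φ (kappa s) - c) l s = φ (birk s l) - l * c :=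
    fun l s => by simp [birkhoffSum, birk, Finset.sum_sub_distrib]
  have hbound : ∀ s, |φ (kappa s) - c| ≤ ‖φ‖ + |c| := fun s =>
    (abs_sub _ _).trans (by gcongr; simpa [norm_kappa] using φ.le_opNorm (kappa s))
  have hlow : ∀ i, -(N * (‖φ‖ + |c|)) ≤ φ (birk (s i) (r i)) - r i * c := fun i => by
    rw [← hsum]
    exact neg_mul_le_birkhoffSum hX (fun s _ => hbound s) (by simpa [hsum] using hN) _ (hs i)
  have hlimlow : Tendsto (fun i => c - N * (‖φ‖ + |c|) / r i) atTop (𝓝 c) := by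
    simpa using ((tendsto_const_div_atTop_nhds_zero_nat _).comp hr).const_sub c
  refine le_of_tendsto_of_tendsto hlimlow ((φ.continuous.tendsto α).comp hlim) ?_
  filter_upwards [hr.eventually_gt_atTop 0] with i hi
  have hi' : (0 : ℝ) < r i := Nat.cast_pos.2 hi
  rw [Function.comp_apply, map_smul, smul_eq_mul, inv_mul_eq_div, sub_le_iff_le_add, ← add_div,
    le_div_iff₀ hi']
  linarith [hlow i]

/-- The sequence of digits that `digit` reads off along the orbit of `q` under `T`. -/
def itinerary {Q : Type*} (T : Q → Q) (digit : Q → Fin 3) (q : Q) : Seq3 :=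
  fun m => digit (T^[m] q)

section Itinerary

variable {Q : Type*} {T : Q → Q} {digit : Q → Fin 3} {A : Set Q}

theorem mapsTo_shift_image_itinerary (hA : Set.MapsTo T A A) :
    Set.MapsTo shift (itinerary T digit '' A) (itinerary T digit '' A) := by
  rintro _ ⟨q, hq, rfl⟩
  exact ⟨T q, hA hq, rfl⟩

theorem discrepancy_itinerary {α : Fin 3 → ℝ} {Φ : Q → Fin 3 → ℝ} (hA : Set.MapsTo T A A)
    (hΦ : ∀ q ∈ A, Φ (T q) = Φ q + (Pi.single (digit q) 1 - α)) {q : Q} (hq : q ∈ A) (r : ℕ) :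
    discrepancy α (itinerary T digit q) r = Φ (T^[r] q) - Φ q := by
  induction r with
  | zero => rw [discrepancy_zero, Function.iterate_zero_apply, sub_self]
  | succ r ih =>
    rw [discrepancy_succ, ih, itinerary, Function.iterate_succ_apply', hΦ _ (hA.iterate r hq)]
    abel

end Itinerary

/-- A block is a word `I₀ … I_{j-1} a` with `a < I_j` and `j ≤ n`: the shortest way for a
sequence to fall below `I` within its first `n + 1` digits. -/
structure BlockBelow (I : Seq3) (n : ℕ) where
  /-- The number `j` of digits shared with `I`; the word has length `j + 1`. -/
  index : Fin (n + 1)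
  /-- The last digit `a`. -/
  digit : Fin 3
  digit_lt : digit < I index

noncomputable instance (I : Seq3) (n : ℕ) : Fintype (BlockBelow I n) :=
  Fintype.ofInjective (fun b => (b.index, b.digit)) fun ⟨_, _, _⟩ ⟨_, _, _⟩ h => by
    simpa using h

namespace BlockBelow

variable {I : Seq3} {n : ℕ} {α : Fin 3 → ℝ}

/-- The discrepancy of the word of a block with respect to the frequency `α`. -/
noncomputable def weight (α : Fin 3 → ℝ) (b : BlockBelow I n) : Fin 3 → ℝ :=
  discrepancy α I b.index + (Pi.single b.digit 1 - α)

theorem exists_weight_eq_discrepancy {s : Seq3} {j : ℕ} (hj : j ≤ n) (hs : LexLtAt j s I) :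
    ∃ b : BlockBelow I n, b.weight α = discrepancy α s (j + 1) :=
  ⟨⟨⟨j, Nat.lt_succ_of_le hj⟩, s j, hs.2⟩, by
    rw [discrepancy_succ, discrepancy_congr hs.1, weight]⟩

theorem exists_mem_stdSimplex_sum_smul_weight_eq_zero {X : Set Seq3}
    (hX : Set.MapsTo shift X X) (hlt : ∀ s ∈ X, ∃ j ≤ n, LexLtAt j s I) (hα : α ∈ DFMZ X) :
    ∃ f ∈ stdSimplex ℝ (BlockBelow I n), ∑ b, f b • b.weight α = 0 := by
  refine (exists_mem_stdSimplex_sum_smul_eq_zero_or_exists_forall_le _).resolve_right ?_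
  rintro ⟨φ, δ, hδ, hφ⟩
  suffices hle : φ α + δ / (n + 1) ≤ φ α by
    have : 0 < δ / (n + 1) := by positivity
    linarith
  refine le_apply_of_mem_DFMZ hX φ (N := n + 1) (fun s hs => ?_) hα
  obtain ⟨j, hj, hsj⟩ := hlt s hs
  obtain ⟨b, hb⟩ := exists_weight_eq_discrepancy (α := α) hj hsj
  refine ⟨j + 1, j.succ_pos, Nat.succ_le_succ hj, ?_⟩
  have hgain : δ ≤ φ (birk s (j + 1)) - (j + 1 : ℕ) * φ α := by
    simpa [hb, discrepancy] using hφ b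
  have hspread : (j + 1 : ℕ) * (δ / (n + 1)) ≤ δ := by
    rw [mul_div_assoc', div_le_iff₀ (by positivity), mul_comm]
    gcongr
    exact_mod_cast Nat.succ_le_succ hj
  linarith

/-- The states of the machine that spells out blocks: the debts towards the blocks, and the position
inside the current block. -/
abbrev SpellState (I : Seq3) (n : ℕ) := (BlockBelow I n → ℝ) × ℕ

open Classical in
/-- Advance inside the current block or, at its end, update the debts and start the next block. The
current block `pick d` is a function of the debts `d`, and `f` prescribes the block frequencies. -/
noncomputable def spellStep (f : BlockBelow I n → ℝ) (pick : (BlockBelow I n → ℝ) → BlockBelow I n)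
    (q : SpellState I n) : SpellState I n :=
  if q.2 < (pick q.1).index then (q.1, q.2 + 1) else (q.1 + f - Pi.single (pick q.1) 1, 0)

/-- The digit of the current block at the current position. -/
def spellDigit (pick : (BlockBelow I n → ℝ) → BlockBelow I n) (q : SpellState I n) : Fin 3 :=
  if q.2 < (pick q.1).index then I q.2 else (pick q.1).digit

/-- The states with balanced debts and a position inside the current block. -/
def spellStates (pick : (BlockBelow I n → ℝ) → BlockBelow I n) : Set (SpellState I n) :=
  {q | q.1 ∈ balanced _ ∧ q.2 ≤ (pick q.1).index}

/-- The discrepancy accumulated on reaching a state, as a function of that state. -/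
noncomputable def spellPotential (α : Fin 3 → ℝ) (q : SpellState I n) : Fin 3 → ℝ :=
  discrepancy α I q.2 - ∑ b, q.1 b • b.weight α

variable {f : BlockBelow I n → ℝ} {pick : (BlockBelow I n → ℝ) → BlockBelow I n}

open Classical in
theorem mapsTo_spellStep
    (hpick : Set.MapsTo (fun d => d + f - Pi.single (pick d) 1) (balanced _) (balanced _)) :
    Set.MapsTo (spellStep f pick) (spellStates pick) (spellStates pick) := by
  rintro ⟨d, i⟩ ⟨hd, -⟩
  rw [spellStep]
  split_ifs with hi
  · exact ⟨hd, hi⟩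
  · exact ⟨hpick hd, Nat.zero_le _⟩

theorem spellPotential_spellStep (hf : ∑ b, f b • b.weight α = 0) {q : SpellState I n}
    (hq : q ∈ spellStates pick) :
    spellPotential α (spellStep f pick q) =
      spellPotential α q + (Pi.single (spellDigit pick q) 1 - α) := by
  classical
  obtain ⟨d, i⟩ := q
  rw [spellStep, spellDigit]
  split_ifs with hi
  · simp only [spellPotential, discrepancy_succ]
    abel
  · obtain rfl : i = (pick d).index := hq.2.antisymm (not_lt.1 hi)
    have hsum : ∑ b, (d + f - Pi.single (pick d) 1 : BlockBelow I n → ℝ) b • b.weight α =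
        ∑ b, d b • b.weight α - (pick d).weight α := by
      simp [sub_smul, add_smul, Finset.sum_add_distrib, hf, Pi.single_apply, ite_smul]
    rw [spellPotential, spellPotential, hsum, weight, discrepancy_zero]
    abel

theorem exists_norm_spellPotential_le (α : Fin 3 → ℝ)
    (pick : (BlockBelow I n → ℝ) → BlockBelow I n) :
    ∃ C, ∀ q ∈ spellStates pick, ‖spellPotential α q‖ ≤ C := by
  obtain ⟨C, hC⟩ := ((Set.finite_Iic n).image fun i => ‖discrepancy α I i‖).bddAbove
  refine ⟨C + Fintype.card (BlockBelow I n) * ∑ b : BlockBelow I n, ‖b.weight α‖,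
    fun q hq => (norm_sub_le _ _).trans (add_le_add ?_ (norm_sum_smul_le_of_mem_balanced _ hq.1))⟩
  exact hC ⟨q.2, hq.2.trans (Fin.is_le _), rfl⟩

theorem spellStep_iterate_of_add_le {d : BlockBelow I n → ℝ} {i t : ℕ}
    (h : i + t ≤ (pick d).index) : (spellStep f pick)^[t] (d, i) = (d, i + t) := by
  induction t with
  | zero => rfl
  | succ t ih =>
    rw [Function.iterate_succ_apply', ih (Nat.le_of_succ_le h)]
    exact if_pos h

theorem exists_le_lexLtAt_itinerary_spellStep (hI : ∀ r, lexLe (shift^[r] I) I)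
    {q : SpellState I n} (hq : q ∈ spellStates pick) :
    ∃ j ≤ n, LexLtAt j (itinerary (spellStep f pick) (spellDigit pick) q) I := by
  obtain ⟨d, i⟩ := q
  obtain ⟨u, hu⟩ := Nat.exists_eq_add_of_le hq.2
  have hdigit : ∀ t ≤ u, itinerary (spellStep f pick) (spellDigit pick) (d, i) t =
      if t < u then I (t + i) else (pick d).digit := fun t ht => by
    rw [itinerary, spellStep_iterate_of_add_le (hu ▸ Nat.add_le_add_left ht i), spellDigit, hu]
    simp only [add_lt_add_iff_left, add_comm]
  have hlt : LexLtAt u (itinerary (spellStep f pick) (spellDigit pick) (d, i)) (shift^[i] I) := by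
    refine ⟨fun t ht => ?_, ?_⟩
    · rw [hdigit t ht.le, if_pos ht, shift_iterate_apply]
    · rw [hdigit u le_rfl, if_neg (lt_irrefl u), shift_iterate_apply, add_comm, ← hu]
      exact (pick d).digit_lt
  obtain ⟨j, hj, hjlt⟩ := hlt.trans_lexLe (hI i)
  have hun : u ≤ n := (Nat.le_add_left u i).trans (hu ▸ Fin.is_le _)
  exact ⟨j, hj.trans hun, hjlt⟩

theorem exists_mapsTo_shift_norm_discrepancy_le (hI : ∀ r, lexLe (shift^[r] I) I)
    (hf : f ∈ stdSimplex ℝ (BlockBelow I n)) (hfα : ∑ b, f b • b.weight α = 0) :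
    ∃ Y : Set Seq3, Y.Nonempty ∧ Set.MapsTo shift Y Y ∧ (∀ s ∈ Y, ∃ j ≤ n, LexLtAt j s I) ∧
      ∃ C, ∀ s ∈ Y, ∀ r, ‖discrepancy α s r‖ ≤ C := by
  classical
  obtain ⟨pick, hpick⟩ := exists_mapsTo_balanced hf
  have hmaps := mapsTo_spellStep hpick
  obtain ⟨C, hC⟩ := exists_norm_spellPotential_le α pick
  refine ⟨itinerary (spellStep f pick) (spellDigit pick) '' spellStates pick,
    ⟨_, (0, 0), ⟨zero_mem_balanced, Nat.zero_le _⟩, rfl⟩, mapsTo_shift_image_itinerary hmaps,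
    ?_, C + C, ?_⟩
  · rintro _ ⟨q, hq, rfl⟩
    exact exists_le_lexLtAt_itinerary_spellStep hI hq
  · rintro _ ⟨q, hq, rfl⟩ r
    rw [discrepancy_itinerary hmaps (fun q => spellPotential_spellStep hfα) hq]
    exact (norm_sub_le _ _).trans (add_le_add (hC _ (hmaps.iterate r hq)) (hC q hq))

end BlockBelow

/-- If `X` is a compact shift-invariant subset of `Σ⁺` with
`α ∈ DF_MZ(X)`, then some element of `X` is lexicographically at least `I(α)`. -/
theorem stmt15 (α : Fin 3 → ℝ) (hα : α ∈ Delta') (Iα : Seq3) (hI : IsInfimax α Iα)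
    (X : Set Seq3) (hXc : IsCompact X) (hXinv : Set.MapsTo shift X X)
    (hαX : α ∈ DFMZ X) :
    ∃ s ∈ X, lexLe Iα s := by
  by_contra! hbelow
  obtain ⟨-, hImax, hIle, -⟩ := hI
  obtain ⟨n, hn⟩ := exists_forall_exists_le_lexLtAt hXc hbelow
  obtain ⟨f, hf, hfα⟩ := BlockBelow.exists_mem_stdSimplex_sum_smul_weight_eq_zero hXinv hn hαX
  obtain ⟨Y, hYne, hYinv, hYlt, C, hC⟩ :=
    BlockBelow.exists_mapsTo_shift_norm_discrepancy_le hImax.2 hf hfα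
  obtain ⟨w, hwY, hwMax, hwα⟩ := exists_mem_closure_mem_MaxSet_hasFreq hα.2 hYne hYinv hC
  obtain ⟨j, -, hj⟩ := closure_minimal hYlt (isClopen_setOf_exists_le_lexLtAt n Iα).isClosed hwY
  exact not_lexLe_iff_exists_lexLtAt.2 ⟨j, hj⟩ (hIle w ⟨hwMax, hwα⟩)
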